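/- Let K ⊆ ℝ² be a Minkowski centered convex body with s(K) ≥ φ, and let z¹, z², z³ ∈ bd(K) ∩ bd(−K) be pairwise linearly independent points such that z¹, z² are consecutive and z², z³ are consecutive. If there is an asymmetry point of K in pos{z¹, z²}, then there is no asymmetry point of K in pos{z², z³}. -/

import Mathlib

open scoped Pointwise RealInnerProductSpace
open Set

noncomputable section

abbrev E2 := EuclideanSpace ℝ (Fin 2)

/-- A convex body: compact convex set with nonempty interior. -/
def IsConvexBody (K : Set E2) : Prop :=
  Convex ℝ K ∧ IsCompact K ∧ (interior K).Nonempty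

/-- circumradius `R(K,C)` -/
def circum (K C : Set E2) : ℝ :=
  sInf {ρ : ℝ | 0 < ρ ∧ ∃ t : E2, K ⊆ ρ • C + {t}}

/-- inradius `r(K,C)` -/
def inrad (K C : Set E2) : ℝ :=
  sSup {ρ : ℝ | 0 < ρ ∧ ∃ t : E2, ρ • C + {t} ⊆ K}

/-- width `w(K,C)` -/
def widthB (K C : Set E2) : ℝ := 2 * inrad (K - K) (C - C)

/-- diameter `D(K,C)` -/
def diamB (K C : Set E2) : ℝ := 2 * circum (K - K) (C - C)

/-- Minkowski asymmetry `s(K)` -/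
def minkAsym (K : Set E2) : ℝ :=
  sInf {ρ : ℝ | 0 < ρ ∧ ∃ c : E2, K - {c} ⊆ ρ • ({c} - K)}

/-- `K` is Minkowski centered -/
def MinkCentered (K : Set E2) : Prop := K ⊆ minkAsym K • (-K)

/-- `τ(K)`: smallest `ρ > 0` with `K ∩ (-K) ⊆ ρ • ((K-K)/2)` -/
def tauB (K : Set E2) : ℝ :=
  sInf {ρ : ℝ | 0 < ρ ∧ K ∩ (-K) ⊆ ρ • ((2:ℝ)⁻¹ • (K - K))}

/-- golden ratio -/
def phiR : ℝ := (1 + Real.sqrt 5) / 2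

def cExpr2 (s : ℝ) : ℝ :=
  (s^2+1)^2 / ((s^2-1) * (s^2+2*s-1+2*Real.sqrt (s*(s^2-1))))

def cExpr3 (s : ℝ) : ℝ := 2*(s^2-2*s-1) / ((s-3)*(s+1))

/-- `ŝ`: the unique `s ∈ (φ,2)` where the two expressions agree. -/
def sHat : ℝ := sInf {s : ℝ | phiR < s ∧ s < 2 ∧ cExpr2 s = cExpr3 s}

def cFun (s : ℝ) : ℝ :=
  if s ≤ phiR then 1 else if s ≤ sHat then cExpr2 s else cExpr3 s

/-- polar body -/
def polarBody (K : Set E2) : Set E2 := {y | ∀ x ∈ K, (inner ℝ x y : ℝ) ≤ 1}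

/-- `γ(K)` -/
def gammaB (K : Set E2) : ℝ :=
  sInf {ρ : ℝ | 0 < ρ ∧
    polarBody ((2:ℝ)⁻¹ • (polarBody K - polarBody K)) ⊆ ρ • convexHull ℝ (K ∪ -K)}

/-- positive hull of two points -/
def posHull2 (a b : E2) : Set E2 := {x | ∃ α β : ℝ, 0 ≤ α ∧ 0 ≤ β ∧ x = α • a + β • b}

/-- asymmetry point of `K`: a point of `bd(K) ∩ bd(−(1/s(K))·K)` -/
def IsAsymPoint (K : Set E2) (p : E2) : Prop :=
  p ∈ frontier K ∧ p ∈ frontier ((-(minkAsym K)⁻¹) • K)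

/-- a well-spread triple of asymmetry points -/
def WellSpread (K : Set E2) (p1 p2 p3 : E2) : Prop :=
  IsAsymPoint K p1 ∧ IsAsymPoint K p2 ∧ IsAsymPoint K p3 ∧
  ∃ a1 a2 a3 : E2, a1 ≠ 0 ∧ a2 ≠ 0 ∧ a3 ≠ 0 ∧
    (∀ x ∈ K, (inner ℝ a1 x : ℝ) ≤ inner ℝ a1 p1) ∧
    (∀ x ∈ K, (inner ℝ a2 x : ℝ) ≤ inner ℝ a2 p2) ∧
    (∀ x ∈ K, (inner ℝ a3 x : ℝ) ≤ inner ℝ a3 p3) ∧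
    (0:E2) ∈ interior (convexHull ℝ {p1, p2, p3}) ∧
    (0:E2) ∈ convexHull ℝ {a1, a2, a3}

/-- two points of `bd(K) ∩ bd(-K)` are consecutive -/
def Consecutive (K : Set E2) (z1 z2 : E2) : Prop :=
  ¬ ∃ z, z ∈ frontier K ∩ frontier (-K) ∧ z ∈ interior (posHull2 z1 z2)

/-- point of the plane from coordinates -/
def pt (x y : ℝ) : E2 := (WithLp.equiv 2 (Fin 2 → ℝ)).symm ![x, y]

/-- the golden house -/
def goldenHouse : Set E2 :=
  convexHull ℝ {pt 1 0, pt (-1) 0, pt 1 (-1), pt (-1) (-1), pt 0 phiR}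

/-!
Write `k = 1 / s(K)`, so that `s(K) ≥ φ` reads `k² + k ≤ 1`, and suppose that both cones at `z²`
contain asymmetry points. Between consecutive points of `bd(K) ∩ bd(-K)` the sign of
`gauge K x - gauge K (-x)` is constant, and an asymmetry point makes it nonnegative; hence `K ⊆ -K`
near `z²`, and a line supporting `-K` at `z²` also supports `K` there. This gives a functional `a`
with `a(z²) = 1` and `|a| ≤ 1` on `K`.

Since `-k K` cannot be moved into the interior of `K`, the normals `g` of the lines touching both
`K` and `-k K`, normalized by `max g = 1` and `min g = -k` on `K`, do not lie in an open half-plane.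
In the plane this yields such normals `d, e, f` with `d + r e = m a` and `d + r' f = m' a`, where
`r, r' > 0` and `m' ≤ 0 ≤ m`. Evaluating both relations at `z²` and at the points where `d`, `e` and
`f` equal `1` produces inequalities which for `k² + k ≤ 1` can only hold with equality. Then
`e(z²) = k`, whereas `K ⊆ -K` near `z²` excludes this.
-/

section SharpInequality

variable {k x d r r' m m' : ℝ}

lemma lt_one_of_sq_add_self_le_one (hk : 0 < k) (hk2 : k ^ 2 + k ≤ 1) : k < 1 := by
  nlinarith

-- The golden ratio enters here: `hslack` bounds a nonnegative quantity by
-- `2 * (d * x) + 2 * (k ^ 2 + k - 1) ≤ 0`, so all the estimates are sharp.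
lemma mul_one_sub_eq_add_and_eq_sub_of_nonneg (hk : 0 < k) (hk2 : k ^ 2 + k ≤ 1)
    (hx0 : 0 ≤ x) (hr' : 0 < r') (hm' : m' ≤ 0) (hrm : r - k ≤ m) (hmd : m ≤ d + r * k)
    (hrm' : r' - k ≤ -m') (hmd' : -m' ≤ -d + r' * k) (hmx : 1 - r * k ≤ m * x)
    (hmx' : 1 - r' * k ≤ m' * x) :
    r * (1 - k) = k + d ∧ r' * (1 - k) = k - d := by
  have hk1 : k < 1 := lt_one_of_sq_add_self_le_one hk hk2
  have hr_le : r * (1 - k) ≤ k + d := by linarith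
  have hr'_le : r' * (1 - k) ≤ k - d := by linarith
  have hr'k : 1 ≤ r' * k := by linarith [mul_nonpos_of_nonpos_of_nonneg hm' hx0]
  have hd : d ≤ 0 := by nlinarith
  have hlower : 1 - d * x ≤ r * k * (1 + x) := by
    linarith [mul_le_mul_of_nonneg_right hmd hx0]
  have hlower' : 1 - k * x ≤ r' * (k - x) := by
    linarith [mul_le_mul_of_nonneg_right hrm' hx0]
  have hxk : 0 < k - x := pos_of_mul_pos_right (by nlinarith) hr'.le
  have hslack : k * (1 + x) * (k + d - r * (1 - k)) + (k - x) * (k - d - r' * (1 - k))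
      ≤ 2 * (d * x) + 2 * (k ^ 2 + k - 1) := by
    linarith [mul_le_mul_of_nonneg_right (add_le_add hlower hlower') (sub_pos.2 hk1).le]
  have hdx : d * x ≤ 0 := mul_nonpos_of_nonpos_of_nonneg hd hx0
  have hgap : 0 ≤ k * (1 + x) * (k + d - r * (1 - k)) :=
    mul_nonneg (by positivity) (sub_nonneg.2 hr_le)
  have hgap' : 0 ≤ (k - x) * (k - d - r' * (1 - k)) := mul_nonneg hxk.le (sub_nonneg.2 hr'_le)
  exact ⟨le_antisymm hr_le <| sub_nonpos.1 <|
      nonpos_of_mul_nonpos_right (a := k * (1 + x)) (by linarith) (by positivity),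
    le_antisymm hr'_le <| sub_nonpos.1 <| nonpos_of_mul_nonpos_right (by linarith) hxk⟩

lemma mul_one_sub_eq_add_and_eq_sub (hk : 0 < k) (hk2 : k ^ 2 + k ≤ 1) (hr : 0 < r) (hr' : 0 < r')
    (hm : 0 ≤ m) (hm' : m' ≤ 0) (hrm : r - k ≤ m) (hmd : m ≤ d + r * k) (hrm' : r' - k ≤ -m')
    (hmd' : -m' ≤ -d + r' * k) (hmx : 1 - r * k ≤ m * x) (hmx' : 1 - r' * k ≤ m' * x) :
    r * (1 - k) = k + d ∧ r' * (1 - k) = k - d := by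
  rcases le_total 0 x with hx0 | hx0
  · exact mul_one_sub_eq_add_and_eq_sub_of_nonneg hk hk2 hx0 hr' hm' hrm hmd hrm' hmd' hmx hmx'
  · have h := mul_one_sub_eq_add_and_eq_sub_of_nonneg (x := -x) (d := -d) (m := -m') (m' := -m)
      hk hk2 (neg_nonneg.2 hx0) hr (neg_nonpos.2 hm) hrm' hmd' (by rwa [neg_neg])
      (by rwa [neg_neg, neg_neg]) (by rwa [neg_mul_neg]) (by rwa [neg_mul_neg])
    rw [sub_neg_eq_add, ← sub_eq_add_neg] at h
    exact h.symm

end SharpInequality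

section InnerProductSpace

variable {E : Type*} [NormedAddCommGroup E] [InnerProductSpace ℝ E] {K : Set E} {k : ℝ} {z a : E}

lemma zero_mem_interior_of_neg_smul_mem (hconv : Convex ℝ K) (hint : (interior K).Nonempty)
    (hk : 0 < k) (hsub : ∀ x ∈ K, -(k • x) ∈ K) : 0 ∈ interior K := by
  obtain ⟨c, hc⟩ := hint
  refine hconv.openSegment_interior_self_subset_interior hc (hsub c (interior_subset hc)) ?_
  refine ⟨k / (1 + k), 1 / (1 + k), by positivity, by positivity, by field_simp; ring, ?_⟩
  module

lemma exists_pos_forall_exists_inner_eq_neg_mul_norm (h0 : 0 ∈ interior K) :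
    ∃ δ : ℝ, 0 < δ ∧ ∀ g : E, ∃ x ∈ K, ⟪g, x⟫ = -(δ * ‖g‖) := by
  obtain ⟨r, hr, hball⟩ := Metric.mem_nhds_iff.1 (mem_interior_iff_mem_nhds.1 h0)
  refine ⟨r / 2, half_pos hr, fun g => ?_⟩
  rcases eq_or_ne g 0 with rfl | hg
  · exact ⟨0, interior_subset h0, by simp⟩
  have hg' : ‖g‖ ≠ 0 := norm_ne_zero_iff.2 hg
  refine ⟨-((r / 2 / ‖g‖) • g), hball ?_, ?_⟩
  · rw [mem_ball_zero_iff, norm_neg, norm_smul, Real.norm_of_nonneg (by positivity),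
      div_mul_cancel₀ _ hg']
    exact half_lt_self hr
  · rw [inner_neg_right, real_inner_smul_right, real_inner_self_eq_norm_sq]
    field_simp

lemma exists_norm_eq_one_forall_inner_le_of_notMem_interior [CompleteSpace E]
    (hconv : Convex ℝ K) (hint : (interior K).Nonempty) {x : E} (hx : x ∉ interior K) :
    ∃ g : E, ‖g‖ = 1 ∧ ∀ y ∈ K, ⟪g, x⟫ ≤ ⟪g, y⟫ := by
  obtain ⟨f, hf0, hf⟩ := geometric_hahn_banach_of_nonempty_interior_point hconv hx hint
  obtain ⟨g, rfl⟩ := (InnerProductSpace.toDual ℝ E).surjective f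
  have hg0 : ‖g‖ ≠ 0 := by simpa using hf0
  simp only [InnerProductSpace.toDual_apply_apply] at hf
  refine ⟨-(‖g‖⁻¹ • g), ?_, fun y hy => ?_⟩
  · rw [norm_neg, norm_smul, norm_inv, norm_norm, inv_mul_cancel₀ hg0]
  · simp only [inner_neg_left, real_inner_smul_left, neg_le_neg_iff]
    exact mul_le_mul_of_nonneg_left (hf y hy) (by positivity)

/-- `K` is contained in `-K` to first order at `z`: every ray from `z` through a point of `K` meets
`-K` in a point other than `z`. For convex `K` with `-z ∈ K` this says that the cone of feasible
directions of `K` at `z` is contained in that of `-K`. -/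
def LocallySubsetNeg (K : Set E) (z : E) : Prop :=
  ∀ x ∈ K, ∃ η : ℝ, 0 < η ∧ -(z + η • (x - z)) ∈ K

-- A line supporting `-K` at `z` then also supports `K` at `z`.
lemma LocallySubsetNeg.exists_strip [CompleteSpace E] (hloc : LocallySubsetNeg K z)
    (hconv : Convex ℝ K) (h0 : 0 ∈ interior K) (hz : -z ∉ interior K) :
    ∃ a : E, ⟪a, z⟫ = 1 ∧ ∀ x ∈ K, |⟪a, x⟫| ≤ 1 := by
  obtain ⟨g, hg1, hgK⟩ := exists_norm_eq_one_forall_inner_le_of_notMem_interior hconv ⟨0, h0⟩ hz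
  simp only [inner_neg_right] at hgK
  have hgz : 0 < ⟪g, z⟫ := by
    obtain ⟨δ, hδ, hδK⟩ := exists_pos_forall_exists_inner_eq_neg_mul_norm h0
    obtain ⟨x, hx, hxg⟩ := hδK g
    rw [hg1, mul_one] at hxg
    linarith [hgK x hx]
  have hle : ∀ x ∈ K, ⟪g, x⟫ ≤ ⟪g, z⟫ := by
    intro x hx
    obtain ⟨η, hη, hmem⟩ := hloc x hx
    have h := hgK _ hmem
    simp only [inner_neg_right, inner_add_right, real_inner_smul_right, inner_sub_right] at h
    exact sub_nonneg.1 (nonneg_of_mul_nonneg_right (by linarith) hη)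
  refine ⟨⟪g, z⟫⁻¹ • g, ?_, fun x hx => ?_⟩
  · rw [real_inner_smul_left, inv_mul_cancel₀ hgz.ne']
  · rw [real_inner_smul_left, abs_mul, abs_inv, abs_of_pos hgz, inv_mul_le_one₀ hgz]
    exact abs_le.2 ⟨hgK x hx, hle x hx⟩

/-- `g` is a normal vector, scaled to attain the value `1` on `K`, of a hyperplane `⟪g, x⟫ = -k`
that touches both `K` and `-(k • K)`. The encoding is meant for `-(k • K) ⊆ K`, when the two
conditions force `g` to have maximum `1` and minimum `-k` on `K`. -/
def IsTouchingNormal (K : Set E) (k : ℝ) (g : E) : Prop :=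
  (∀ x ∈ K, -k ≤ ⟪g, x⟫) ∧ ∃ P ∈ K, ⟪g, P⟫ = 1

namespace IsTouchingNormal

variable {g : E}

lemma abs_inner_le (hg : IsTouchingNormal K k g) (hz : z ∈ K) (hz' : -z ∈ K) : |⟪g, z⟫| ≤ k := by
  have h := hg.1 _ hz'
  rw [inner_neg_right] at h
  exact abs_le.2 ⟨hg.1 z hz, by linarith⟩

lemma inner_ne_of_locallySubsetNeg (hg : IsTouchingNormal K k g) (hk : k < 1)
    (hloc : LocallySubsetNeg K z) : ⟪g, z⟫ ≠ k := by
  intro hgz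
  obtain ⟨hgK, P, hP, hgP⟩ := hg
  obtain ⟨η, hη, hmem⟩ := hloc P hP
  have h := hgK _ hmem
  rw [inner_neg_right, inner_add_right, real_inner_smul_right, inner_sub_right, hgP, hgz] at h
  have : 0 < η * (1 - k) := mul_pos hη (sub_pos.2 hk)
  linarith

lemma ne_smul (hg : IsTouchingNormal K k g) (hk : k < 1) (hz : z ∈ K) (hz' : -z ∈ K)
    (haz : ⟪a, z⟫ = 1) (haK : ∀ x ∈ K, |⟪a, x⟫| ≤ 1) (t : ℝ) : g ≠ t • a := by
  rintro rfl
  have ht : |t| ≤ k := by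
    simpa [real_inner_smul_left, haz] using hg.abs_inner_le hz hz'
  obtain ⟨-, P, hP, hgP⟩ := hg
  have hone : |t| * |⟪a, P⟫| = 1 := by
    rw [← abs_mul, ← real_inner_smul_left, hgP, abs_one]
  linarith [mul_le_of_le_one_right (abs_nonneg t) (haK P hP)]

end IsTouchingNormal

lemma isCompact_setOf_isTouchingNormal [FiniteDimensional ℝ E] (hcomp : IsCompact K)
    (h0 : 0 ∈ interior K) : IsCompact {g | IsTouchingNormal K k g} := by
  obtain ⟨δ, hδ, hδK⟩ := exists_pos_forall_exists_inner_eq_neg_mul_norm h0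
  let C : Set (E × E) :=
    (Metric.closedBall 0 (k / δ) ×ˢ K) ∩ {q | (∀ x ∈ K, -k ≤ ⟪q.1, x⟫) ∧ ⟪q.1, q.2⟫ = 1}
  have hC : IsCompact C := by
    refine ((isCompact_closedBall _ _).prod hcomp).inter_right ?_
    simp only [ofPred_and, ofPred_forall]
    exact (isClosed_biInter fun x _ => isClosed_le (by fun_prop) (by fun_prop)).inter
      (isClosed_eq (by fun_prop) (by fun_prop))
  convert hC.image continuous_fst
  ext g
  constructor
  · rintro ⟨hgK, P, hP, hgP⟩
    obtain ⟨x, hx, hxg⟩ := hδK g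
    have hbound : ‖g‖ ≤ k / δ := by
      rw [le_div_iff₀ hδ]
      linarith [hgK x hx]
    exact ⟨(g, P), ⟨⟨mem_closedBall_zero_iff.2 hbound, hP⟩, hgK, hgP⟩, rfl⟩
  · rintro ⟨⟨g, P⟩, ⟨⟨-, hP⟩, hgK, hgP⟩, rfl⟩
    exact ⟨hgK, P, hP, hgP⟩

-- `g` separates `K` from a point of its homothetic copy with centre `t • v`, for small `t`.
lemma exists_norm_eq_one_inner_nonpos_forall_neg_mul_inner_sub_le [CompleteSpace E]
    (hconv : Convex ℝ K) (hint : (interior K).Nonempty) (hk : 0 < k)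
    (hsub : ∀ x ∈ K, -(k • x) ∈ K) (hopt : ∀ c, ∃ x ∈ K, c - k • (x - c) ∉ interior K) (v : E)
    {ε : ℝ} (hε : 0 < ε) :
    ∃ g : E, ‖g‖ = 1 ∧ ⟪g, v⟫ ≤ 0 ∧ ∃ x ∈ K, ∀ y ∈ K, -(k * ⟪g, x⟫) - ε ≤ ⟪g, y⟫ := by
  obtain ⟨t, ht, hε'⟩ : ∃ t > 0, t * (1 + k) * (‖v‖ + 1) = ε :=
    ⟨ε / ((1 + k) * (‖v‖ + 1)), by positivity, by field_simp⟩
  obtain ⟨x, hx, hxint⟩ := hopt (t • v)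
  obtain ⟨g, hg1, hg⟩ := exists_norm_eq_one_forall_inner_le_of_notMem_interior hconv hint hxint
  have hval : ⟪g, t • v - k • (x - t • v)⟫ = t * (1 + k) * ⟪g, v⟫ - k * ⟪g, x⟫ := by
    simp only [inner_sub_right, real_inner_smul_right]
    ring
  rw [hval] at hg
  refine ⟨g, hg1, ?_, x, hx, fun y hy => ?_⟩
  · have h := hg _ (hsub x hx)
    rw [inner_neg_right, real_inner_smul_right] at h
    exact nonpos_of_mul_nonpos_right (by linarith) (by positivity : 0 < t * (1 + k))
  · have hgv : -(‖v‖ + 1) ≤ ⟪g, v⟫ := by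
      have := neg_le_of_abs_le (abs_real_inner_le_norm g v)
      rw [hg1, one_mul] at this
      linarith
    have := mul_le_mul_of_nonneg_left hgv (by positivity : 0 ≤ t * (1 + k))
    linarith [hg y hy]

lemma exists_norm_eq_one_inner_nonpos_forall_neg_mul_inner_le [FiniteDimensional ℝ E]
    (hconv : Convex ℝ K) (hcomp : IsCompact K) (hint : (interior K).Nonempty) (hk : 0 < k)
    (hsub : ∀ x ∈ K, -(k • x) ∈ K) (hopt : ∀ c, ∃ x ∈ K, c - k • (x - c) ∉ interior K) (v : E) :
    ∃ g : E, ‖g‖ = 1 ∧ ⟪g, v⟫ ≤ 0 ∧ ∃ x ∈ K, ∀ y ∈ K, -(k * ⟪g, x⟫) ≤ ⟪g, y⟫ := by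
  let C (n : ℕ) : Set (E × E) := (Metric.sphere 0 1 ×ˢ K) ∩
    {q | ⟪q.1, v⟫ ≤ 0 ∧ ∀ y ∈ K, -(k * ⟪q.1, q.2⟫) - 1 / ((n : ℝ) + 1) ≤ ⟪q.1, y⟫}
  have hclosed (n : ℕ) : IsClosed (C n) := by
    refine (Metric.isClosed_sphere.prod hcomp.isClosed).inter ?_
    simp only [ofPred_and, ofPred_forall]
    exact (isClosed_le (by fun_prop) (by fun_prop)).inter
      (isClosed_biInter fun y _ => isClosed_le (by fun_prop) (by fun_prop))
  have hanti (n : ℕ) : C (n + 1) ⊆ C n := by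
    rintro q ⟨hq, hqv, hqK⟩
    refine ⟨hq, hqv, fun y hy => le_trans ?_ (hqK y hy)⟩
    gcongr
    simp
  have hne (n : ℕ) : (C n).Nonempty := by
    obtain ⟨g, hg1, hgv, x, hx, hgx⟩ :=
      exists_norm_eq_one_inner_nonpos_forall_neg_mul_inner_sub_le hconv hint hk hsub hopt v
        (Nat.one_div_pos_of_nat (α := ℝ) (n := n))
    exact ⟨(g, x), ⟨mem_sphere_zero_iff_norm.2 hg1, hx⟩, hgv, hgx⟩
  have hC0 : IsCompact (C 0) :=
    ((isCompact_sphere 0 1).prod hcomp).of_isClosed_subset (hclosed 0) inter_subset_left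
  obtain ⟨⟨g, x⟩, hgx⟩ :=
    IsCompact.nonempty_iInter_of_sequence_nonempty_isCompact_isClosed C hanti hne hC0 hclosed
  rw [mem_iInter] at hgx
  obtain ⟨⟨hg, hx⟩, hgv, -⟩ := hgx 0
  refine ⟨g, mem_sphere_zero_iff_norm.1 hg, hgv, x, hx, fun y hy => ?_⟩
  have hlim : Filter.Tendsto (fun n : ℕ => -(k * ⟪g, x⟫) - 1 / ((n : ℝ) + 1)) Filter.atTop
      (nhds (-(k * ⟪g, x⟫))) := by
    simpa only [sub_zero] using
      tendsto_const_nhds.sub (tendsto_one_div_add_atTop_nhds_zero_nat (𝕜 := ℝ))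
  exact le_of_tendsto' hlim fun n => (hgx n).2.2 y hy

lemma exists_isTouchingNormal_inner_nonpos [FiniteDimensional ℝ E] (hconv : Convex ℝ K)
    (hcomp : IsCompact K) (h0 : 0 ∈ interior K) (hk : 0 < k) (hsub : ∀ x ∈ K, -(k • x) ∈ K)
    (hopt : ∀ c, ∃ x ∈ K, c - k • (x - c) ∉ interior K) (v : E) :
    ∃ g, IsTouchingNormal K k g ∧ ⟪g, v⟫ ≤ 0 := by
  obtain ⟨g, hg1, hgv, P, hP, hgK⟩ :=
    exists_norm_eq_one_inner_nonpos_forall_neg_mul_inner_le hconv hcomp ⟨0, h0⟩ hk hsub hopt v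
  have hpos : 0 < ⟪g, P⟫ := by
    obtain ⟨δ, hδ, hδK⟩ := exists_pos_forall_exists_inner_eq_neg_mul_norm h0
    obtain ⟨x, hx, hxg⟩ := hδK g
    rw [hg1, mul_one] at hxg
    exact pos_of_mul_pos_right (by linarith [hgK x hx]) hk.le
  refine ⟨⟪g, P⟫⁻¹ • g, ⟨fun y hy => ?_, P, hP, ?_⟩, ?_⟩
  · rw [real_inner_smul_left, inv_mul_eq_div, le_div_iff₀ hpos]
    linarith [hgK y hy]
  · rw [real_inner_smul_left, inv_mul_cancel₀ hpos.ne']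
  · rw [real_inner_smul_left]
    exact mul_nonpos_of_nonneg_of_nonpos (inv_nonneg.2 hpos.le) hgv

namespace IsTouchingNormal

variable {d e f : E} {r r' m m' : ℝ}

lemma sub_le_of_add_smul_eq (hd : IsTouchingNormal K k d) (he : IsTouchingNormal K k e)
    (haK : ∀ x ∈ K, |⟪a, x⟫| ≤ 1) (hm : 0 ≤ m) (hde : d + r • e = m • a) : r - k ≤ m := by
  obtain ⟨P, hP, heP⟩ := he.2
  have h : ⟪d, P⟫ + r * 1 = m * ⟪a, P⟫ := by
    rw [← heP, ← real_inner_smul_left, ← real_inner_smul_left, ← inner_add_left, hde]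
  linarith [hd.1 P hP, mul_le_of_le_one_right hm (le_of_abs_le (haK P hP))]

lemma inner_eq_of_add_smul_eq (hk : 0 < k) (hk2 : k ^ 2 + k ≤ 1) (hz : z ∈ K) (hz' : -z ∈ K)
    (haz : ⟪a, z⟫ = 1) (haK : ∀ x ∈ K, |⟪a, x⟫| ≤ 1) (hd : IsTouchingNormal K k d)
    (he : IsTouchingNormal K k e) (hf : IsTouchingNormal K k f) (hr : 0 < r) (hr' : 0 < r')
    (hm : 0 ≤ m) (hm' : m' ≤ 0) (hde : d + r • e = m • a) (hdf : d + r' • f = m' • a) :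
    ⟪e, z⟫ = k := by
  have hde_inner (x : E) : ⟪d, x⟫ + r * ⟪e, x⟫ = m * ⟪a, x⟫ := by
    simp only [← real_inner_smul_left, ← inner_add_left, hde]
  have hdf_inner (x : E) : ⟪d, x⟫ + r' * ⟪f, x⟫ = m' * ⟪a, x⟫ := by
    simp only [← real_inner_smul_left, ← inner_add_left, hdf]
  have hez : ⟪e, z⟫ ≤ k := le_of_abs_le (he.abs_inner_le hz hz')
  have hmz : m = ⟪d, z⟫ + r * ⟪e, z⟫ := by rw [hde_inner, haz, mul_one]
  have hmz' : m' = ⟪d, z⟫ + r' * ⟪f, z⟫ := by rw [hdf_inner, haz, mul_one]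
  have hrm : r - k ≤ m := hd.sub_le_of_add_smul_eq he haK hm hde
  have hrm' : r' - k ≤ -m' :=
    hd.sub_le_of_add_smul_eq (a := -a) hf (by simpa only [inner_neg_left, abs_neg] using haK)
      (neg_nonneg.2 hm') (by rw [hdf, neg_smul_neg])
  obtain ⟨P, hP, hdP⟩ := hd.2
  have hratio : r * (1 - k) = k + ⟪d, z⟫ := by
    refine (mul_one_sub_eq_add_and_eq_sub (x := ⟪a, P⟫) hk hk2 hr hr' hm hm' hrm ?_ hrm' ?_ ?_ ?_).1
    · linarith [mul_le_mul_of_nonneg_left hez hr.le]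
    · linarith [mul_le_mul_of_nonneg_left (hf.1 z hz) hr'.le]
    · linarith [hde_inner P, mul_le_mul_of_nonneg_left (he.1 P hP) hr.le]
    · linarith [hdf_inner P, mul_le_mul_of_nonneg_left (hf.1 P hP) hr'.le]
  exact hez.antisymm (le_of_mul_le_mul_left (by linarith) hr)

end IsTouchingNormal

variable {S : Set E} {w : E}

-- `-⟪g, u⟫ / ⟪g, w⟫` is the parameter at which the line `u + t • w` crosses the hyperplane `g`.
lemma exists_mem_isMinOn_inner_div (hS : IsCompact S) (hw : ∀ g ∈ S, ⟪g, w⟫ ≠ 0)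
    (hcrit : ∀ v, ∃ g ∈ S, ⟪g, v⟫ ≤ 0) (u : E) :
    ∃ d ∈ S, 0 < ⟪d, w⟫ ∧ ∀ g ∈ S, 0 < ⟪g, w⟫ → ⟪d, u⟫ / ⟪d, w⟫ ≤ ⟪g, u⟫ / ⟪g, w⟫ := by
  have hside : IsCompact (S ∩ {g | 0 ≤ ⟪g, w⟫}) :=
    hS.inter_right (isClosed_le (by fun_prop) (by fun_prop))
  have hne : (S ∩ {g | 0 ≤ ⟪g, w⟫}).Nonempty := by
    obtain ⟨g, hg, hgw⟩ := hcrit (-w)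
    rw [inner_neg_right, neg_nonpos] at hgw
    exact ⟨g, hg, hgw⟩
  obtain ⟨d, ⟨hd, hdw⟩, hmin⟩ := hside.exists_isMinOn (f := fun g => ⟪g, u⟫ / ⟪g, w⟫) hne
    (ContinuousOn.div (by fun_prop) (by fun_prop) fun g hg => hw g hg.1)
  exact ⟨d, hd, hdw.lt_of_ne' (hw d hd), fun g hg hgw => hmin ⟨hg, hgw.le⟩⟩

lemma exists_opposite_pair_inner_nonpos (hS : IsCompact S) (hw : ∀ g ∈ S, ⟪g, w⟫ ≠ 0)
    (hcrit : ∀ v, ∃ g ∈ S, ⟪g, v⟫ ≤ 0) (u : E) :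
    ∃ d ∈ S, ∃ e ∈ S, ∃ t : ℝ, 0 < ⟪d, w⟫ ∧ ⟪e, w⟫ < 0 ∧
      ⟪d, u + t • w⟫ ≤ 0 ∧ ⟪e, u + t • w⟫ ≤ 0 := by
  obtain ⟨d, hd, hdw, hdmin⟩ := exists_mem_isMinOn_inner_div hS hw hcrit u
  obtain ⟨e, he, hew, hemin⟩ :=
    exists_mem_isMinOn_inner_div (w := -w) hS (by simpa using hw) hcrit u
  simp only [inner_neg_right, neg_pos, div_neg, neg_le_neg_iff] at hew hemin
  have hde : ⟪d, u⟫ / ⟪d, w⟫ ≤ ⟪e, u⟫ / ⟪e, w⟫ := by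
    refine le_of_forall_lt_imp_le_of_dense fun c hc => ?_
    obtain ⟨g, hg, hgv⟩ := hcrit (u - c • w)
    rw [inner_sub_right, real_inner_smul_right, sub_nonpos] at hgv
    rcases (hw g hg).lt_or_gt with hgw | hgw
    · exact ((le_div_iff_of_neg hgw).2 hgv).trans (hemin g hg hgw)
    · exact absurd ((hdmin g hg hgw).trans ((div_le_iff₀ hgw).2 hgv)) hc.not_ge
  refine ⟨d, hd, e, he, -(⟪d, u⟫ / ⟪d, w⟫), hdw, hew, ?_, ?_⟩
  · rw [inner_add_right, real_inner_smul_right, neg_mul, div_mul_cancel₀ _ hdw.ne', add_neg_cancel]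
  · rw [inner_add_right, real_inner_smul_right, neg_mul, ← sub_eq_add_neg, sub_nonpos]
    exact (le_div_iff_of_neg hew).1 hde

lemma exists_pos_add_smul_eq (hspan : ∀ g : E, ⟪g, w⟫ = 0 → g = ⟪g, z⟫ • a) {d e : E}
    (hd : 0 < ⟪d, w⟫) (he : ⟪e, w⟫ < 0) :
    ∃ r : ℝ, 0 < r ∧ ⟪d + r • e, w⟫ = 0 ∧ d + r • e = ⟪d + r • e, z⟫ • a := by
  have h0 : ⟪d + (⟪d, w⟫ / -⟪e, w⟫) • e, w⟫ = 0 := by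
    rw [inner_add_left, real_inner_smul_left, div_neg, neg_mul, div_mul_cancel₀ _ he.ne,
      add_neg_cancel]
  exact ⟨_, div_pos hd (neg_pos.2 he), h0, hspan _ h0⟩

lemma exists_opposite_pair_add_smul_eq (hS : IsCompact S) (hw : ∀ g ∈ S, ⟪g, w⟫ ≠ 0)
    (hcrit : ∀ v, ∃ g ∈ S, ⟪g, v⟫ ≤ 0) (hspan : ∀ g : E, ⟪g, w⟫ = 0 → g = ⟪g, z⟫ • a) (u : E) :
    ∃ d ∈ S, ∃ e ∈ S, 0 < ⟪d, w⟫ ∧ ⟪e, w⟫ < 0 ∧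
      ∃ r : ℝ, 0 < r ∧ d + r • e = ⟪d + r • e, z⟫ • a ∧ ⟪d + r • e, u⟫ ≤ 0 := by
  obtain ⟨d, hd, e, he, t, hdw, hew, hdu, heu⟩ := exists_opposite_pair_inner_nonpos hS hw hcrit u
  obtain ⟨r, hr, hperp, heq⟩ := exists_pos_add_smul_eq hspan hdw hew
  refine ⟨d, hd, e, he, hdw, hew, r, hr, heq, ?_⟩
  calc ⟪d + r • e, u⟫ = ⟪d + r • e, u + t • w⟫ := by
        rw [inner_add_right, real_inner_smul_right, hperp, mul_zero, add_zero]
    _ = ⟪d, u + t • w⟫ + r * ⟪e, u + t • w⟫ := by rw [inner_add_left, real_inner_smul_left]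
    _ ≤ 0 := add_nonpos hdu (mul_nonpos_of_nonneg_of_nonpos hr.le heu)

lemma add_inv_smul_eq {d e : E} {r m : ℝ} (hr : 0 < r) (h : d + r • e = m • a) :
    e + r⁻¹ • d = (r⁻¹ * m) • a := by
  rw [mul_smul, ← h, smul_add, inv_smul_smul₀ hr.ne', add_comm]

lemma exists_add_smul_eq_nonneg_and_nonpos (hS : IsCompact S) (hw : ∀ g ∈ S, ⟪g, w⟫ ≠ 0)
    (hcrit : ∀ v, ∃ g ∈ S, ⟪g, v⟫ ≤ 0) (hspan : ∀ g : E, ⟪g, w⟫ = 0 → g = ⟪g, z⟫ • a) :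
    ∃ d ∈ S, ∃ e ∈ S, ∃ f ∈ S, ∃ r r' m m' : ℝ, 0 < r ∧ 0 < r' ∧ 0 ≤ m ∧ m' ≤ 0 ∧
      d + r • e = m • a ∧ d + r' • f = m' • a := by
  obtain ⟨d₁, hd₁, e₁, he₁, hd₁w, -, r₁, hr₁, heq₁, hsign₁⟩ :=
    exists_opposite_pair_add_smul_eq hS hw hcrit hspan (-z)
  obtain ⟨d₂, hd₂, e₂, he₂, -, he₂w, r₂, hr₂, heq₂, hsign₂⟩ :=
    exists_opposite_pair_add_smul_eq hS hw hcrit hspan z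
  rw [inner_neg_right, neg_nonpos] at hsign₁
  obtain ⟨r, hr, -, heq⟩ := exists_pos_add_smul_eq hspan hd₁w he₂w
  rcases le_total 0 ⟪d₁ + r • e₂, z⟫ with hsign | hsign
  · exact ⟨e₂, he₂, d₁, hd₁, d₂, hd₂, r⁻¹, r₂⁻¹, _, _, inv_pos.2 hr, inv_pos.2 hr₂,
      mul_nonneg (inv_nonneg.2 hr.le) hsign,
      mul_nonpos_of_nonneg_of_nonpos (inv_nonneg.2 hr₂.le) hsign₂,
      add_inv_smul_eq hr heq, add_inv_smul_eq hr₂ heq₂⟩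
  · exact ⟨d₁, hd₁, e₁, he₁, e₂, he₂, r₁, r, _, _, hr₁, hr, hsign₁, hsign, heq₁, heq⟩

end InnerProductSpace

lemma exists_forall_inner_eq_zero_imp_eq_smul {a z : E2} (haz : ⟪a, z⟫ = 1) :
    ∃ w : E2, ∀ g : E2, ⟪g, w⟫ = 0 → g = ⟪g, z⟫ • a := by
  refine ⟨!₂[-a 1, a 0], fun g hg => ?_⟩
  simp only [PiLp.inner_apply, Fin.sum_univ_two, RCLike.inner_apply, conj_trivial] at haz hg ⊢
  have hg' : -(g 0 * a 1) + g 1 * a 0 = 0 := by simpa [mul_comm] using hg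
  ext i
  fin_cases i
  · simp only [Fin.zero_eta, PiLp.smul_apply, smul_eq_mul]
    linear_combination -g 0 * haz - z 1 * hg'
  · simp only [Fin.mk_one, PiLp.smul_apply, smul_eq_mul]
    linear_combination -g 1 * haz + z 0 * hg'

theorem not_locallySubsetNeg {K : Set E2} {k : ℝ} {z : E2} (hconv : Convex ℝ K)
    (hcomp : IsCompact K) (h0 : 0 ∈ interior K) (hk : 0 < k) (hk2 : k ^ 2 + k ≤ 1)
    (hsub : ∀ x ∈ K, -(k • x) ∈ K) (hopt : ∀ c, ∃ x ∈ K, c - k • (x - c) ∉ interior K)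
    (hz : z ∈ K) (hnegz : -z ∈ frontier K) : ¬ LocallySubsetNeg K z := by
  intro hloc
  have hk1 : k < 1 := lt_one_of_sq_add_self_le_one hk hk2
  have hz' : -z ∈ K := hcomp.isClosed.frontier_subset hnegz
  obtain ⟨a, haz, haK⟩ := hloc.exists_strip hconv h0 hnegz.2
  obtain ⟨w, hw⟩ := exists_forall_inner_eq_zero_imp_eq_smul haz
  obtain ⟨d, hd, e, he, f, hf, r, r', m, m', hr, hr', hm, hm', hde, hdf⟩ :=
    exists_add_smul_eq_nonneg_and_nonpos (isCompact_setOf_isTouchingNormal hcomp h0)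
      (fun g hg hgw => hg.ne_smul hk1 hz hz' haz haK _ (hw g hgw))
      (exists_isTouchingNormal_inner_nonpos hconv hcomp h0 hk hsub hopt) hw
  exact he.inner_ne_of_locallySubsetNeg hk1 hloc
    (hd.inner_eq_of_add_smul_eq hk hk2 hz hz' haz haK he hf hr hr' hm hm' hde hdf)

lemma exists_pos_one_sub_add_mul_pos (β : ℝ) : ∃ η : ℝ, 0 < η ∧ η ≤ 1 ∧ 0 < 1 - η + η * β := by
  have hβ : 0 < 2 + |β| := by positivity
  refine ⟨(2 + |β|)⁻¹, inv_pos.2 hβ, inv_le_one_of_one_le₀ (by linarith [abs_nonneg β]), ?_⟩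
  have h : 1 - (2 + |β|)⁻¹ + (2 + |β|)⁻¹ * β = (2 + |β|)⁻¹ * (1 + |β| + β) := by
    field_simp
    ring
  rw [h]
  exact mul_pos (inv_pos.2 hβ) (by linarith [neg_abs_le β])

section Gauge

variable {E : Type*} [NormedAddCommGroup E] [NormedSpace ℝ E] {K : Set E}

lemma exists_pos_smul_mem_frontier_inter_frontier_neg (hconv : Convex ℝ K)
    (hbdd : Bornology.IsBounded K) (h0 : 0 ∈ interior K) {w : E} (hw0 : w ≠ 0)
    (hw : gauge K w = gauge K (-w)) : ∃ c : ℝ, 0 < c ∧ c • w ∈ frontier K ∩ frontier (-K) := by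
  have hnhds : K ∈ nhds 0 := mem_interior_iff_mem_nhds.1 h0
  have hpos : 0 < gauge K w :=
    (gauge_pos (absorbent_nhds_zero hnhds) ((NormedSpace.isVonNBounded_iff ℝ).2 hbdd)).2 hw0
  have hinv : 0 ≤ (gauge K w)⁻¹ := inv_nonneg.2 hpos.le
  refine ⟨(gauge K w)⁻¹, inv_pos.2 hpos, ?_, ?_⟩
  · rw [← gauge_eq_one_iff_mem_frontier hconv hnhds, gauge_smul_of_nonneg hinv, smul_eq_mul,
      inv_mul_cancel₀ hpos.ne']
  · rw [← gauge_eq_one_iff_mem_frontier hconv.neg (neg_mem_nhds_zero _ hnhds),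
      gauge_neg_set_eq_gauge_neg, ← smul_neg, gauge_smul_of_nonneg hinv, ← hw, smul_eq_mul,
      inv_mul_cancel₀ hpos.ne']

lemma exists_lineMap_gauge_eq_gauge_neg (hconv : Convex ℝ K) (h0 : 0 ∈ interior K) {u p : E}
    (hu : gauge K u ≤ gauge K (-u)) (hp : gauge K (-p) < gauge K p) :
    ∃ t ∈ Ico (0 : ℝ) 1,
      gauge K (AffineMap.lineMap u p t) = gauge K (-AffineMap.lineMap u p t) := by
  have hcont : Continuous (gauge K) := continuous_gauge hconv (mem_interior_iff_mem_nhds.1 h0)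
  let f (t : ℝ) : ℝ := gauge K (AffineMap.lineMap u p t) - gauge K (-AffineMap.lineMap u p t)
  have hf : Continuous f := by
    have hline : Continuous fun t : ℝ => AffineMap.lineMap u p t := AffineMap.lineMap_continuous
    exact (hcont.comp hline).sub (hcont.comp hline.neg)
  have hf0 : f 0 ≤ 0 := by simpa [f] using hu
  have hf1 : 0 < f 1 := by simpa [f] using hp
  obtain ⟨t, ht, hft⟩ := intermediate_value_Ico zero_le_one hf.continuousOn ⟨hf0, hf1⟩
  exact ⟨t, ht, sub_eq_zero.1 hft⟩

lemma exists_pos_neg_mem_of_smul_mem {z : E} {β : ℝ} (hconv : Convex ℝ K)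
    (h0 : 0 ∈ interior K) (hz : z ∈ frontier K) (hz' : -z ∈ K) (hx : β • z ∈ K) :
    ∃ η : ℝ, 0 < η ∧ -(z + η • (β • z - z)) ∈ K := by
  obtain ⟨η, hη, -, hηβ⟩ := exists_pos_one_sub_add_mul_pos β
  have hβ : β ≤ 1 := by
    by_contra! hβ
    have hle := gauge_le_one_of_mem hx
    rw [gauge_smul_of_nonneg (by linarith),
      (gauge_eq_one_iff_mem_frontier hconv (mem_interior_iff_mem_nhds.1 h0)).2 hz, smul_eq_mul,
      mul_one] at hle
    linarith
  refine ⟨η, hη, ?_⟩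
  have heq : -(z + η • (β • z - z)) = (1 - η + η * β) • -z := by module
  rw [heq]
  exact hconv.smul_mem_of_zero_mem (interior_subset h0) hz'
    ⟨hηβ.le, by linarith [mul_le_of_le_one_right hη.le hβ]⟩

end Gauge

section Cone

variable {u v x : E2}

lemma exists_basis_eq_of_linearIndependent (h : LinearIndependent ℝ ![u, v]) :
    ∃ b : Module.Basis (Fin 2) ℝ E2, b 0 = u ∧ b 1 = v :=
  ⟨basisOfLinearIndependentOfCardEqFinrank h (by simp), by simp, by simp⟩

lemma exists_eq_smul_add_smul (h : LinearIndependent ℝ ![u, v]) (x : E2) :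
    ∃ α β : ℝ, x = α • u + β • v := by
  obtain ⟨b, rfl, rfl⟩ := exists_basis_eq_of_linearIndependent h
  exact ⟨b.repr x 0, b.repr x 1, by rw [← Fin.sum_univ_two fun i => b.repr x i • b i, b.sum_repr]⟩

lemma smul_add_smul_mem_interior_posHull2 (h : LinearIndependent ℝ ![u, v]) {α β : ℝ}
    (hα : 0 < α) (hβ : 0 < β) : α • u + β • v ∈ interior (posHull2 u v) := by
  obtain ⟨b, rfl, rfl⟩ := exists_basis_eq_of_linearIndependent h
  have hsub : {x | 0 < b.coord 0 x ∧ 0 < b.coord 1 x} ⊆ posHull2 (b 0) (b 1) := fun x hx =>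
    ⟨b.coord 0 x, b.coord 1 x, hx.1.le, hx.2.le, by
      simpa only [Fin.sum_univ_two, Module.Basis.coord_apply] using (b.sum_repr x).symm⟩
  have hcont (i : Fin 2) : Continuous (b.coord i) := LinearMap.continuous_of_finiteDimensional _
  have hopen : IsOpen {x | 0 < b.coord 0 x ∧ 0 < b.coord 1 x} :=
    (isOpen_lt continuous_const (hcont 0)).inter (isOpen_lt continuous_const (hcont 1))
  refine interior_maximal hsub hopen ?_
  simpa using ⟨hα, hβ⟩

lemma posHull2_comm (u v : E2) : posHull2 u v = posHull2 v u := by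
  ext x
  constructor <;> rintro ⟨α, β, hα, hβ, rfl⟩ <;> exact ⟨β, α, hβ, hα, add_comm _ _⟩

lemma Consecutive.symm {K : Set E2} (h : Consecutive K u v) : Consecutive K v u := by
  rwa [Consecutive, posHull2_comm]

end Cone

section Consecutive

variable {K : Set E2} {z1 z2 z3 p : E2} {α β : ℝ}

lemma neg_mem_of_consecutive (hconv : Convex ℝ K) (hcomp : IsCompact K) (h0 : 0 ∈ interior K)
    (hli : LinearIndependent ℝ ![z1, z2]) (hcons : Consecutive K z1 z2) (hp : p ∈ posHull2 z1 z2)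
    (hpg : gauge K (-p) < gauge K p) (hα : 0 < α) (hβ : 0 < β) (hx : α • z1 + β • z2 ∈ K) :
    -(α • z1 + β • z2) ∈ K := by
  by_contra hx'
  have hgauge : gauge K (α • z1 + β • z2) ≤ gauge K (-(α • z1 + β • z2)) := by
    rw [← hcomp.isClosed.closure_eq,
      ← gauge_le_one_iff_mem_closure hconv (mem_interior_iff_mem_nhds.1 h0), not_le] at hx'
    exact (gauge_le_one_of_mem hx).trans hx'.le
  obtain ⟨t, ⟨ht0, ht1⟩, ht⟩ := exists_lineMap_gauge_eq_gauge_neg hconv h0 hgauge hpg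
  obtain ⟨γ, δ, hγ, hδ, rfl⟩ := hp
  have hline : AffineMap.lineMap (α • z1 + β • z2) (γ • z1 + δ • z2) t =
      ((1 - t) * α + t * γ) • z1 + ((1 - t) * β + t * δ) • z2 := by
    rw [AffineMap.lineMap_apply_module]
    module
  rw [hline] at ht
  have hA : 0 < (1 - t) * α + t * γ := by nlinarith [mul_pos (sub_pos.2 ht1) hα]
  have hB : 0 < (1 - t) * β + t * δ := by nlinarith [mul_pos (sub_pos.2 ht1) hβ]
  obtain ⟨c, hc, hcw⟩ := exists_pos_smul_mem_frontier_inter_frontier_neg hconv hcomp.isBounded h0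
    (fun hw => hA.ne' (LinearIndependent.pair_iff.1 hli _ _ hw).1) ht
  refine hcons ⟨_, hcw, ?_⟩
  rw [smul_add, smul_smul, smul_smul]
  exact smul_add_smul_mem_interior_posHull2 hli (mul_pos hc hA) (mul_pos hc hB)

lemma exists_pos_neg_mem_of_consecutive (hconv : Convex ℝ K) (hcomp : IsCompact K)
    (h0 : 0 ∈ interior K) (hz2 : z2 ∈ K) (hli : LinearIndependent ℝ ![z1, z2])
    (hcons : Consecutive K z1 z2) (hp : p ∈ posHull2 z1 z2) (hpg : gauge K (-p) < gauge K p)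
    (hα : 0 < α) (hx : α • z1 + β • z2 ∈ K) :
    ∃ η : ℝ, 0 < η ∧ -(z2 + η • (α • z1 + β • z2 - z2)) ∈ K := by
  obtain ⟨η, hη, hη1, hηβ⟩ := exists_pos_one_sub_add_mul_pos β
  have hmem : z2 + η • (α • z1 + β • z2 - z2) ∈ K := hconv.add_smul_sub_mem hz2 hx ⟨hη.le, hη1⟩
  have heq : z2 + η • (α • z1 + β • z2 - z2) = (η * α) • z1 + (1 - η + η * β) • z2 := by module
  rw [heq] at hmem
  refine ⟨η, hη, ?_⟩
  rw [heq]
  exact neg_mem_of_consecutive hconv hcomp h0 hli hcons hp hpg (mul_pos hη hα) hηβ hmem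

lemma neg_coeff_of_consecutive (hz1 : z1 ∈ frontier K ∩ frontier (-K))
    (hz3 : α • z1 + β • z2 ∈ frontier K ∩ frontier (-K)) (hli12 : LinearIndependent ℝ ![z1, z2])
    (hli23 : LinearIndependent ℝ ![z2, α • z1 + β • z2])
    (hli13 : LinearIndependent ℝ ![z1, α • z1 + β • z2])
    (hcons12 : Consecutive K z1 z2) (hcons23 : Consecutive K z2 (α • z1 + β • z2)) : α < 0 := by
  by_contra! hα
  have hα0 : α ≠ 0 := by
    rintro rfl
    simpa using LinearIndependent.pair_iff.1 hli23 β (-1) (by module)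
  have hβ0 : β ≠ 0 := by
    rintro rfl
    simpa using LinearIndependent.pair_iff.1 hli13 α (-1) (by module)
  have hαpos : 0 < α := hα.lt_of_ne' hα0
  rcases hβ0.lt_or_gt with hβ | hβ
  · refine hcons23 ⟨z1, hz1, ?_⟩
    have heq : z1 = (-β / α) • z2 + α⁻¹ • (α • z1 + β • z2) := by
      match_scalars <;> field_simp
      ring
    nth_rw 2 [heq]
    exact smul_add_smul_mem_interior_posHull2 hli23 (div_pos (neg_pos.2 hβ) hαpos)
      (inv_pos.2 hαpos)
  · exact hcons12 ⟨_, hz3, smul_add_smul_mem_interior_posHull2 hli12 hαpos hβ⟩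

-- The two cones cover a neighbourhood of `z2`, up to the line through `z2`.
theorem locallySubsetNeg_of_consecutive {q : E2} (hconv : Convex ℝ K) (hcomp : IsCompact K)
    (h0 : 0 ∈ interior K) (hz1 : z1 ∈ frontier K ∩ frontier (-K))
    (hz2 : z2 ∈ frontier K ∩ frontier (-K)) (hz3 : z3 ∈ frontier K ∩ frontier (-K))
    (hli12 : LinearIndependent ℝ ![z1, z2]) (hli23 : LinearIndependent ℝ ![z2, z3])
    (hli13 : LinearIndependent ℝ ![z1, z3]) (hcons12 : Consecutive K z1 z2)
    (hcons23 : Consecutive K z2 z3) (hp : p ∈ posHull2 z1 z2) (hpg : gauge K (-p) < gauge K p)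
    (hq : q ∈ posHull2 z2 z3) (hqg : gauge K (-q) < gauge K q) : LocallySubsetNeg K z2 := by
  intro x hx
  have hz2K : z2 ∈ K := hcomp.isClosed.frontier_subset hz2.1
  obtain ⟨α, β, hz3eq⟩ := exists_eq_smul_add_smul hli12 z3
  obtain ⟨γ, δ, hxeq⟩ := exists_eq_smul_add_smul hli12 x
  have hα : α < 0 := by
    rw [hz3eq] at hz3 hli23 hli13 hcons23
    exact neg_coeff_of_consecutive hz1 hz3 hli12 hli23 hli13 hcons12 hcons23
  rcases lt_trichotomy γ 0 with hγ | rfl | hγ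
  · have hxeq' : x = (γ / α) • z3 + (δ - γ / α * β) • z2 := by
      rw [hxeq, hz3eq]
      match_scalars <;> field_simp [hα.ne]
      ring
    rw [hxeq'] at hx ⊢
    rw [posHull2_comm] at hq
    exact exists_pos_neg_mem_of_consecutive hconv hcomp h0 hz2K
      (LinearIndependent.pair_symm_iff.1 hli23) hcons23.symm hq hqg
      (div_pos_of_neg_of_neg hγ hα) hx
  · rw [zero_smul, zero_add] at hxeq
    rw [hxeq] at hx ⊢
    exact exists_pos_neg_mem_of_smul_mem hconv h0 hz2.1
      (hcomp.isClosed.neg.frontier_subset hz2.2) hx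
  · rw [hxeq] at hx ⊢
    exact exists_pos_neg_mem_of_consecutive hconv hcomp h0 hz2K hli12 hcons12 hp hpg hγ hx

end Consecutive

section MinkowskiAsymmetry

variable {K : Set E2}

lemma IsAsymPoint.gauge_neg_lt_gauge {p : E2} (hp : IsAsymPoint K p) (hconv : Convex ℝ K)
    (hcomp : IsCompact K) (h0 : 0 ∈ interior K) (hs : 1 < minkAsym K) :
    gauge K (-p) < gauge K p := by
  rw [(gauge_eq_one_iff_mem_frontier hconv (mem_interior_iff_mem_nhds.1 h0)).2 hp.1]
  obtain ⟨x, hx, rfl⟩ := (hcomp.smul (-(minkAsym K)⁻¹)).isClosed.frontier_subset hp.2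
  calc gauge K (-(-(minkAsym K)⁻¹ • x)) = (minkAsym K)⁻¹ * gauge K x := by
        rw [neg_smul, neg_neg, gauge_smul_of_nonneg (inv_nonneg.2 (by linarith)), smul_eq_mul]
    _ ≤ (minkAsym K)⁻¹ :=
        mul_le_of_le_one_right (inv_nonneg.2 (by linarith)) (gauge_le_one_of_mem hx)
    _ < 1 := inv_lt_one_of_one_lt₀ hs

lemma MinkCentered.neg_inv_smul_mem (hc : MinkCentered K) (hs : 0 < minkAsym K) {x : E2}
    (hx : x ∈ K) : -((minkAsym K)⁻¹ • x) ∈ K :=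
  (mem_smul_set_iff_inv_smul_mem₀ hs.ne' _ _).1 (hc hx)

lemma exists_sub_smul_sub_notMem_interior (hcomp : IsCompact K) (hs : 0 < minkAsym K) (c : E2) :
    ∃ x ∈ K, c - (minkAsym K)⁻¹ • (x - c) ∉ interior K := by
  by_contra! hint
  have hev : ∀ᶠ t in nhds (minkAsym K)⁻¹, ∀ x ∈ K, c - t • (x - c) ∈ interior K := by
    refine hcomp.eventually_forall_of_forall_eventually fun x hx => ?_
    have hcont : Continuous fun q : ℝ × E2 => c - q.1 • (q.2 - c) := by fun_prop
    exact hcont.continuousAt.eventually_mem (isOpen_interior.mem_nhds (hint x hx))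
  obtain ⟨t, ht, htK⟩ := hev.exists_gt
  have htpos : 0 < t := (inv_pos.2 hs).trans ht
  have hmem : K - {c} ⊆ t⁻¹ • ({c} - K) := by
    rintro _ ⟨x, hx, _, rfl, rfl⟩
    rw [mem_smul_set_iff_inv_smul_mem₀ (inv_ne_zero htpos.ne'), inv_inv]
    exact ⟨_, rfl, _, interior_subset (htK x hx), sub_sub_cancel _ _⟩
  have hle : minkAsym K ≤ t⁻¹ := csInf_le ⟨0, fun ρ hρ => hρ.1.le⟩ ⟨inv_pos.2 htpos, c, hmem⟩
  exact hle.not_gt (inv_lt_of_inv_lt₀ hs ht)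

end MinkowskiAsymmetry

lemma inv_sq_add_inv_le_one {s : ℝ} (hs : Real.goldenRatio ≤ s) : s⁻¹ ^ 2 + s⁻¹ ≤ 1 := by
  have hinv : s⁻¹ ≤ Real.goldenRatio⁻¹ := inv_anti₀ Real.goldenRatio_pos hs
  have hnonneg : 0 ≤ s⁻¹ := inv_nonneg.2 (Real.goldenRatio_pos.le.trans hs)
  calc s⁻¹ ^ 2 + s⁻¹ ≤ Real.goldenRatio⁻¹ ^ 2 + Real.goldenRatio⁻¹ := by gcongr
    _ = 1 := by rw [Real.inv_goldenRatio, neg_sq, Real.goldenConj_sq]; ring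

theorem stmt8 (K : Set E2) (hK : IsConvexBody K) (hc : MinkCentered K)
    (hs : phiR ≤ minkAsym K) (z1 z2 z3 : E2)
    (hz1 : z1 ∈ frontier K ∩ frontier (-K))
    (hz2 : z2 ∈ frontier K ∩ frontier (-K))
    (hz3 : z3 ∈ frontier K ∩ frontier (-K))
    (hli12 : LinearIndependent ℝ ![z1, z2])
    (hli23 : LinearIndependent ℝ ![z2, z3])
    (hli13 : LinearIndependent ℝ ![z1, z3])
    (hcons12 : Consecutive K z1 z2) (hcons23 : Consecutive K z2 z3)
    (hasym12 : ∃ p, IsAsymPoint K p ∧ p ∈ posHull2 z1 z2) :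
    ¬ ∃ p, IsAsymPoint K p ∧ p ∈ posHull2 z2 z3 := by
  rintro ⟨q, hqa, hq⟩
  obtain ⟨p, hpa, hp⟩ := hasym12
  obtain ⟨hconv, hcomp, hint⟩ := hK
  replace hs : Real.goldenRatio ≤ minkAsym K := hs
  have hs1 : 1 < minkAsym K := Real.one_lt_goldenRatio.trans_le hs
  have hs0 : 0 < minkAsym K := zero_lt_one.trans hs1
  have hsub : ∀ x ∈ K, -((minkAsym K)⁻¹ • x) ∈ K := fun _ => hc.neg_inv_smul_mem hs0
  have h0 : 0 ∈ interior K := zero_mem_interior_of_neg_smul_mem hconv hint (inv_pos.2 hs0) hsub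
  have hnegz2 : -z2 ∈ frontier K := ((Homeomorph.neg E2).preimage_frontier K).ge hz2.2
  have hloc : LocallySubsetNeg K z2 :=
    locallySubsetNeg_of_consecutive hconv hcomp h0 hz1 hz2 hz3 hli12 hli23 hli13 hcons12 hcons23
      hp (hpa.gauge_neg_lt_gauge hconv hcomp h0 hs1) hq (hqa.gauge_neg_lt_gauge hconv hcomp h0 hs1)
  exact not_locallySubsetNeg hconv hcomp h0 (inv_pos.2 hs0) (inv_sq_add_inv_le_one hs) hsub
    (exists_sub_smul_sub_notMem_interior hcomp hs0) (hcomp.isClosed.frontier_subset hz2.1) hnegz2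
    hloc
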